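/- For all x ∈ (0,∞), the double inequality (x² + 12)/(12x⁴(x+1)²) < [ψ'(x)]² + ψ''(x) < (x² + 4x + 12)/(12x⁴(x+1)²) holds. -/

import Mathlib

/-- The digamma function `ψ(x) = Γ'(x)/Γ(x)`. -/
noncomputable def digamma (x : ℝ) : ℝ := deriv Real.Gamma x / Real.Gamma x

/-!
For `F = ψ' ^ 2 + ψ''`, the recurrence `ψ' (x + 1) = ψ' x - 1 / x ^ 2` and its derivative give
`F x - F (x + 1) = 2 / x ^ 2 * (ψ' x - 1 / x - 1 / (2 * x ^ 2))`, which is affine in `ψ' x`. Two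
functions on `(0, ∞)` with the same limit along `x, x + 1, x + 2, …` compare as their differences
`f x - f (x + 1)` do. Hence bounding `F` by a rational function `B` reduces to bounding `ψ'` by
the rational function obtained on replacing `F` by `B` in this identity. The same comparison, now
with `ψ' x - ψ' (x + 1) = 1 / x ^ 2`, reduces the latter to an inequality of rational functions,
which clearing denominators turns into the positivity of polynomials with positive coefficients.
-/

open Filter Set Topology

section Comparison

variable {f g : ℝ → ℝ} {l x : ℝ}

theorem tendsto_const_add_natCast_atTop (x : ℝ) :
    Tendsto (fun n : ℕ ↦ x + n) atTop atTop :=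
  tendsto_atTop_add_const_left _ x tendsto_natCast_atTop_atTop

theorem lt_of_sub_add_one_lt (hstep : ∀ y, 0 < y → f y - f (y + 1) < g y - g (y + 1))
    (hx : 0 < x) (hf : Tendsto (fun n : ℕ ↦ f (x + n)) atTop (𝓝 l))
    (hg : Tendsto (fun n : ℕ ↦ g (x + n)) atTop (𝓝 l)) : f x < g x := by
  have hanti : StrictAnti fun n : ℕ ↦ g (x + n) - f (x + n) := by
    refine strictAnti_nat_of_succ_lt fun n ↦ ?_
    rw [Nat.cast_succ, ← add_assoc]
    linarith [hstep (x + n) (by positivity)]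
  have hlim : Tendsto (fun n : ℕ ↦ g (x + n) - f (x + n)) atTop (𝓝 0) := by
    simpa using hg.sub hf
  have hpos := (hanti.antitone.le_of_tendsto hlim 1).trans_lt (hanti zero_lt_one)
  simpa using hpos

end Comparison

section HurwitzZeta

/-- The Hurwitz zeta function `ζ(m, x) = ∑ₖ (x + k)⁻ᵐ` at a natural exponent `m ≥ 2` and a real
`x > 0`; the series gives the polygamma functions. -/
noncomputable def hurwitzZetaNat (m : ℕ) (x : ℝ) : ℝ := ∑' k : ℕ, 1 / (x + k) ^ m

variable {m : ℕ} {x : ℝ}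

theorem summable_one_div_add_nat_pow (hm : 1 < m) (hx : 0 < x) :
    Summable fun k : ℕ ↦ 1 / (x + k) ^ m := by
  refine ((Real.summable_one_div_nat_add_rpow x m).2 (mod_cast hm)).congr fun k ↦ ?_
  rw [abs_of_pos (by positivity), add_comm, Real.rpow_natCast]

theorem hurwitzZetaNat_add_one (hm : 1 < m) (hx : 0 < x) :
    hurwitzZetaNat m (x + 1) = hurwitzZetaNat m x - 1 / x ^ m := by
  have hshift : hurwitzZetaNat m (x + 1) = ∑' k : ℕ, 1 / (x + (k + 1 : ℕ)) ^ m :=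
    tsum_congr fun k ↦ by push_cast; ring_nf
  rw [hshift, hurwitzZetaNat, (summable_one_div_add_nat_pow hm hx).tsum_eq_zero_add]
  simp

theorem tendsto_hurwitzZetaNat_add_nat (m : ℕ) (x : ℝ) :
    Tendsto (fun n : ℕ ↦ hurwitzZetaNat m (x + n)) atTop (𝓝 0) := by
  refine (tendsto_sum_nat_add fun k : ℕ ↦ 1 / (x + k) ^ m).congr fun n ↦ ?_
  exact tsum_congr fun k ↦ by push_cast; ring_nf

theorem hasDerivAt_one_div_add_pow (m : ℕ) {c : ℝ} (h : x + c ≠ 0) :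
    HasDerivAt (fun y ↦ 1 / (y + c) ^ m) (-(m * (1 / (x + c) ^ (m + 1)))) x := by
  have hzpow := (hasDerivAt_zpow (-m : ℤ) (x + c) (.inl h)).comp_add_const x c
  refine (hzpow.congr_deriv ?_).congr_of_eventuallyEq (.of_forall fun y ↦ by simp)
  rw [← neg_add', zpow_neg, ← Nat.cast_succ, zpow_natCast]
  simp

theorem hasDerivAt_hurwitzZetaNat (hm : 1 < m) (hx : 0 < x) :
    HasDerivAt (hurwitzZetaNat m) (-(m * hurwitzZetaNat (m + 1) x)) x := by
  rw [hurwitzZetaNat, ← tsum_mul_left, ← tsum_neg]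
  have hbound := (summable_one_div_add_nat_pow (hm.trans m.lt_succ_self) (half_pos hx)).mul_left
    (m : ℝ)
  refine hasDerivAt_tsum_of_isPreconnected hbound isOpen_Ioi isPreconnected_Ioi
    (fun k y (hy : x / 2 < y) ↦ hasDerivAt_one_div_add_pow m ?_)
    (fun k y (hy : x / 2 < y) ↦ ?_) (half_lt_self hx) (summable_one_div_add_nat_pow hm hx)
    (half_lt_self hx)
  · have : 0 < y := (half_pos hx).trans hy
    positivity
  · have : 0 < y := (half_pos hx).trans hy
    rw [norm_neg, Real.norm_of_nonneg (by positivity)]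
    gcongr

end HurwitzZeta

section Digamma

variable {x y : ℝ}

theorem hasDerivAt_log_Gamma (hx : 0 < x) :
    HasDerivAt (Real.log ∘ Real.Gamma) (digamma x) x := by
  have hdiff : DifferentiableAt ℝ Real.Gamma x :=
    Real.differentiableAt_Gamma fun m ↦ by linarith [m.cast_nonneg (α := ℝ)]
  exact hdiff.hasDerivAt.log (Real.Gamma_pos_of_pos hx).ne'

theorem log_Gamma_add_one (hx : 0 < x) :
    (Real.log ∘ Real.Gamma) (x + 1) = (Real.log ∘ Real.Gamma) x + Real.log x := by
  rw [Function.comp_apply, Real.Gamma_add_one hx.ne',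
    Real.log_mul hx.ne' (Real.Gamma_pos_of_pos hx).ne', add_comm, Function.comp_apply]

theorem digamma_add_one (hx : 0 < x) : digamma (x + 1) = digamma x + 1 / x := by
  have hshift := (hasDerivAt_log_Gamma (x := x + 1) (by positivity)).comp_add_const x 1
  have hsum := (hasDerivAt_log_Gamma hx).add (Real.hasDerivAt_log hx.ne')
  rw [one_div]
  refine hshift.unique (hsum.congr_of_eventuallyEq ?_)
  filter_upwards [lt_mem_nhds hx] with y hy using log_Gamma_add_one hy

theorem digamma_add_nat (hx : 0 < x) (n : ℕ) :
    digamma (x + n) = digamma x + ∑ k ∈ Finset.range n, 1 / (x + k) := by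
  induction n with
  | zero => simp
  | succ n ih =>
    rw [Finset.sum_range_succ, ← add_assoc, ← ih, Nat.cast_succ, ← add_assoc,
      digamma_add_one (by positivity)]

theorem slope_log_Gamma_add_one (hx : 0 < x) :
    slope (Real.log ∘ Real.Gamma) x (x + 1) = Real.log x := by
  rw [slope_def_field, log_Gamma_add_one hx, add_sub_cancel_left, add_sub_cancel_left, div_one]

theorem digamma_le_log (hx : 0 < x) : digamma x ≤ Real.log x :=
  slope_log_Gamma_add_one hx ▸ Real.convexOn_log_Gamma.le_slope_of_hasDerivAt hx
    (add_pos hx one_pos) (lt_add_one x) (hasDerivAt_log_Gamma hx)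

theorem log_sub_one_div_le_digamma (hx : 0 < x) : Real.log x - 1 / x ≤ digamma x := by
  have hx' : 0 < x + 1 := by positivity
  have hslope := Real.convexOn_log_Gamma.slope_le_of_hasDerivAt hx hx' (lt_add_one x)
    (hasDerivAt_log_Gamma hx')
  rw [slope_log_Gamma_add_one hx, digamma_add_one hx] at hslope
  linarith

theorem tendsto_digamma_sub_log : Tendsto (fun x ↦ digamma x - Real.log x) atTop (𝓝 0) := by
  have hinv : Tendsto (fun x : ℝ ↦ 1 / x) atTop (𝓝 0) := tendsto_const_nhds.div_atTop tendsto_id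
  refine squeeze_zero_norm' ?_ hinv
  filter_upwards [eventually_gt_atTop 0] with x hx
  rw [Real.norm_eq_abs, abs_le]
  constructor <;>
    linarith [digamma_le_log hx, log_sub_one_div_le_digamma hx, one_div_pos.2 hx]

theorem tendsto_digamma_add_sub_digamma (c : ℝ) :
    Tendsto (fun x ↦ digamma (x + c) - digamma x) atTop (𝓝 0) := by
  have hshift := tendsto_digamma_sub_log.comp (tendsto_atTop_add_const_right atTop c tendsto_id)
  have hlim := (hshift.sub tendsto_digamma_sub_log).add (Real.tendsto_log_comp_add_sub_log c)
  simp only [sub_zero, add_zero] at hlim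
  refine hlim.congr fun x ↦ ?_
  simp only [Function.comp_apply, id_eq]
  ring

theorem hasSum_digamma_sub (hx : 0 < x) (hxy : x ≤ y) :
    HasSum (fun k : ℕ ↦ 1 / (x + k) - 1 / (y + k)) (digamma y - digamma x) := by
  have hterm (k : ℕ) : 0 ≤ 1 / (x + k) - 1 / (y + k) := by
    rw [sub_nonneg]
    gcongr
  rw [hasSum_iff_tendsto_nat_of_nonneg hterm]
  have hlim := ((tendsto_digamma_add_sub_digamma (y - x)).comp
    (tendsto_const_add_natCast_atTop x)).const_sub (digamma y - digamma x)
  rw [sub_zero] at hlim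
  refine hlim.congr fun n ↦ ?_
  rw [Function.comp_apply, show x + n + (y - x) = y + n by ring, digamma_add_nat hx,
    digamma_add_nat (hx.trans_le hxy), Finset.sum_sub_distrib]
  ring

theorem hasDerivAt_digamma (hx : 0 < x) : HasDerivAt digamma (hurwitzZetaNat 2 x) x := by
  have hx2 : 0 < x / 2 := half_pos hx
  have hseries : HasDerivAt (fun y ↦ ∑' k : ℕ, (1 / (x / 2 + k) - 1 / (y + k)))
      (hurwitzZetaNat 2 x) x := by
    rw [hurwitzZetaNat]
    refine hasDerivAt_tsum_of_isPreconnected (t := Ioi (x / 2)) (y₀ := x)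
      (g := fun (k : ℕ) y ↦ 1 / (x / 2 + k) - 1 / (y + k))
      (g' := fun (k : ℕ) y ↦ 1 / (y + k) ^ 2)
      (summable_one_div_add_nat_pow one_lt_two hx2) isOpen_Ioi isPreconnected_Ioi
      (fun k y (hy : x / 2 < y) ↦ ?_) (fun k y (hy : x / 2 < y) ↦ ?_) (half_lt_self hx)
      (hasSum_digamma_sub hx2 (half_lt_self hx).le).summable (half_lt_self hx)
    · have hy0 : 0 < y := hx2.trans hy
      simpa using (hasDerivAt_one_div_add_pow 1 (c := k) (by positivity)).const_sub
        (1 / (x / 2 + k))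
    · have hy0 : 0 < y := hx2.trans hy
      rw [Real.norm_of_nonneg (by positivity)]
      gcongr
  refine (hseries.const_add (digamma (x / 2))).congr_of_eventuallyEq ?_
  filter_upwards [lt_mem_nhds (half_lt_self hx)] with y hy
  rw [(hasSum_digamma_sub hx2 hy.le).tsum_eq, add_sub_cancel]

theorem deriv_digamma (hx : 0 < x) : deriv digamma x = hurwitzZetaNat 2 x :=
  (hasDerivAt_digamma hx).deriv

theorem deriv_deriv_digamma (hx : 0 < x) :
    deriv (deriv digamma) x = -(2 * hurwitzZetaNat 3 x) := by
  refine ((hasDerivAt_hurwitzZetaNat one_lt_two hx).congr_of_eventuallyEq ?_).deriv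
  filter_upwards [lt_mem_nhds hx] with y hy using deriv_digamma hy

theorem deriv_digamma_add_one (hx : 0 < x) :
    deriv digamma (x + 1) = deriv digamma x - 1 / x ^ 2 := by
  rw [deriv_digamma hx, deriv_digamma (by positivity), hurwitzZetaNat_add_one one_lt_two hx]

theorem deriv_deriv_digamma_add_one (hx : 0 < x) :
    deriv (deriv digamma) (x + 1) = deriv (deriv digamma) x + 2 / x ^ 3 := by
  rw [deriv_deriv_digamma hx, deriv_deriv_digamma (by positivity),
    hurwitzZetaNat_add_one (by norm_num) hx]
  ring

theorem tendsto_deriv_digamma_add_nat (hx : 0 < x) :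
    Tendsto (fun n : ℕ ↦ deriv digamma (x + n)) atTop (𝓝 0) :=
  (tendsto_hurwitzZetaNat_add_nat 2 x).congr fun _ ↦ (deriv_digamma (by positivity)).symm

theorem tendsto_deriv_deriv_digamma_add_nat (hx : 0 < x) :
    Tendsto (fun n : ℕ ↦ deriv (deriv digamma) (x + n)) atTop (𝓝 0) := by
  have hlim := ((tendsto_hurwitzZetaNat_add_nat 3 x).const_mul 2).neg
  rw [mul_zero, neg_zero] at hlim
  exact hlim.congr fun _ ↦ (deriv_deriv_digamma (by positivity)).symm

end Digamma

section TrigammaFromDiff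

/-- The combination `F = ψ' ^ 2 + ψ''` of the trigamma and tetragamma functions. -/
noncomputable def trigammaSqAddTetragamma (x : ℝ) : ℝ :=
  (deriv digamma x) ^ 2 + deriv (deriv digamma) x

/-- The solution `t` of `f x - f (x + 1) = 2 / x ^ 2 * (t - 1 / x - 1 / (2 * x ^ 2))`: the value
`ψ' x` would have if `f` were `ψ' ^ 2 + ψ''`. It carries bounds for `ψ' ^ 2 + ψ''` over to bounds
for `ψ'`. -/
noncomputable def trigammaFromDiff (f : ℝ → ℝ) (x : ℝ) : ℝ :=
  1 / x + 1 / (2 * x ^ 2) + x ^ 2 / 2 * (f x - f (x + 1))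

variable {f g : ℝ → ℝ} {x : ℝ}

theorem trigammaFromDiff_trigammaSqAddTetragamma (hx : 0 < x) :
    trigammaFromDiff trigammaSqAddTetragamma x = deriv digamma x := by
  rw [trigammaFromDiff, trigammaSqAddTetragamma, trigammaSqAddTetragamma,
    deriv_digamma_add_one hx, deriv_deriv_digamma_add_one hx]
  field_simp
  ring

theorem trigammaFromDiff_lt_trigammaFromDiff_iff (hx : 0 < x) :
    trigammaFromDiff f x < trigammaFromDiff g x ↔ f x - f (x + 1) < g x - g (x + 1) := by
  rw [trigammaFromDiff, trigammaFromDiff, add_lt_add_iff_left,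
    mul_lt_mul_iff_of_pos_left (by positivity)]

theorem tendsto_trigammaFromDiff (hf : Tendsto (fun x ↦ x ^ 2 * f x) atTop (𝓝 0)) :
    Tendsto (trigammaFromDiff f) atTop (𝓝 0) := by
  have hinv : Tendsto (fun x : ℝ ↦ x⁻¹) atTop (𝓝 0) := tendsto_inv_atTop_zero
  have hadd : Tendsto (fun x : ℝ ↦ x + 1) atTop atTop :=
    tendsto_atTop_add_const_right _ 1 tendsto_id
  have hratio : Tendsto (fun x : ℝ ↦ (1 - (x + 1)⁻¹) ^ 2) atTop (𝓝 ((1 - 0) ^ 2)) :=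
    ((hinv.comp hadd).const_sub 1).pow 2
  have hlim : Tendsto (fun x ↦ x⁻¹ + x⁻¹ ^ 2 / 2 +
      (x ^ 2 * f x - (1 - (x + 1)⁻¹) ^ 2 * ((x + 1) ^ 2 * f (x + 1))) / 2) atTop (𝓝 0) := by
    simpa using (hinv.add ((hinv.pow 2).div_const 2)).add
      ((hf.sub (hratio.mul (hf.comp hadd))).div_const 2)
  refine hlim.congr' ?_
  filter_upwards [eventually_gt_atTop 0] with x hx
  rw [trigammaFromDiff]
  field_simp
  ring

theorem tendsto_trigammaSqAddTetragamma_add_nat (hx : 0 < x) :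
    Tendsto (fun n : ℕ ↦ trigammaSqAddTetragamma (x + n)) atTop (𝓝 0) := by
  simpa [trigammaSqAddTetragamma] using ((tendsto_deriv_digamma_add_nat hx).pow 2).add
    (tendsto_deriv_deriv_digamma_add_nat hx)

end TrigammaFromDiff

section RationalBound

/-- The rational function bounding `ψ' ^ 2 + ψ''` from below for `c = 0`, from above for `c = 4`. -/
noncomputable def rationalBound (c x : ℝ) : ℝ :=
  (x ^ 2 + c * x + 12) / (12 * x ^ 4 * (x + 1) ^ 2)

variable {x : ℝ}

theorem tendsto_sq_mul_rationalBound (c : ℝ) :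
    Tendsto (fun x ↦ x ^ 2 * rationalBound c x) atTop (𝓝 0) := by
  have hinv : Tendsto (fun x : ℝ ↦ x⁻¹) atTop (𝓝 0) := tendsto_inv_atTop_zero
  have hinv_add : Tendsto (fun x : ℝ ↦ (x + 1)⁻¹) atTop (𝓝 0) :=
    hinv.comp (tendsto_atTop_add_const_right _ 1 tendsto_id)
  have hlim : Tendsto (fun x : ℝ ↦ (1 + c * x⁻¹ + 12 * x⁻¹ ^ 2) * ((x + 1)⁻¹ ^ 2 / 12))
      atTop (𝓝 0) := by
    simpa using (((hinv.const_mul c).const_add 1).add ((hinv.pow 2).const_mul 12)).mul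
      ((hinv_add.pow 2).div_const 12)
  refine hlim.congr' ?_
  filter_upwards [eventually_gt_atTop 0] with x hx
  rw [rationalBound]
  field_simp

theorem tendsto_rationalBound (c : ℝ) : Tendsto (rationalBound c) atTop (𝓝 0) := by
  have hlim := (tendsto_inv_atTop_zero.pow 2).mul (tendsto_sq_mul_rationalBound c)
  rw [mul_zero] at hlim
  refine hlim.congr' ?_
  filter_upwards [eventually_gt_atTop 0] with x hx
  field_simp

theorem trigammaFromDiff_rationalBound_zero_sub_lt (hx : 0 < x) :
    trigammaFromDiff (rationalBound 0) x - trigammaFromDiff (rationalBound 0) (x + 1) <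
      1 / x ^ 2 := by
  have hdiff : 1 / x ^ 2 -
      (trigammaFromDiff (rationalBound 0) x - trigammaFromDiff (rationalBound 0) (x + 1)) =
      (308 + 1016 * x + 1676 * x ^ 2 + 1376 * x ^ 3 + 536 * x ^ 4 + 80 * x ^ 5) /
        (24 * (x + 1) ^ 4 * (x + 2) ^ 4 * (x + 3) ^ 2) := by
    simp only [trigammaFromDiff, rationalBound, add_assoc x]
    norm_num only
    field_simp
    ring
  rw [← sub_pos, hdiff]
  positivity

theorem lt_trigammaFromDiff_rationalBound_four_sub (hx : 0 < x) :
    1 / x ^ 2 <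
      trigammaFromDiff (rationalBound 4) x - trigammaFromDiff (rationalBound 4) (x + 1) := by
  have hdiff :
      trigammaFromDiff (rationalBound 4) x - trigammaFromDiff (rationalBound 4) (x + 1) -
        1 / x ^ 2 =
      (576 + 2244 * x + 3708 * x ^ 2 + 2944 * x ^ 3 + 1116 * x ^ 4 + 164 * x ^ 5) /
        (24 * x * (x + 1) ^ 4 * (x + 2) ^ 4 * (x + 3) ^ 2) := by
    simp only [trigammaFromDiff, rationalBound, add_assoc x]
    norm_num only
    field_simp
    ring
  rw [← sub_pos, hdiff]
  positivity

theorem trigammaFromDiff_rationalBound_zero_lt_deriv_digamma (hx : 0 < x) :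
    trigammaFromDiff (rationalBound 0) x < deriv digamma x := by
  refine lt_of_sub_add_one_lt (fun y hy ↦ ?_) hx
    ((tendsto_trigammaFromDiff (tendsto_sq_mul_rationalBound 0)).comp
      (tendsto_const_add_natCast_atTop x)) (tendsto_deriv_digamma_add_nat hx)
  rw [deriv_digamma_add_one hy, sub_sub_cancel]
  exact trigammaFromDiff_rationalBound_zero_sub_lt hy

theorem deriv_digamma_lt_trigammaFromDiff_rationalBound_four (hx : 0 < x) :
    deriv digamma x < trigammaFromDiff (rationalBound 4) x := by
  refine lt_of_sub_add_one_lt (fun y hy ↦ ?_) hx (tendsto_deriv_digamma_add_nat hx)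
    ((tendsto_trigammaFromDiff (tendsto_sq_mul_rationalBound 4)).comp
      (tendsto_const_add_natCast_atTop x))
  rw [deriv_digamma_add_one hy, sub_sub_cancel]
  exact lt_trigammaFromDiff_rationalBound_four_sub hy

theorem rationalBound_zero_lt_trigammaSqAddTetragamma (hx : 0 < x) :
    rationalBound 0 x < trigammaSqAddTetragamma x := by
  refine lt_of_sub_add_one_lt (fun y hy ↦ ?_) hx
    ((tendsto_rationalBound 0).comp (tendsto_const_add_natCast_atTop x))
    (tendsto_trigammaSqAddTetragamma_add_nat hx)
  rw [← trigammaFromDiff_lt_trigammaFromDiff_iff hy, trigammaFromDiff_trigammaSqAddTetragamma hy]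
  exact trigammaFromDiff_rationalBound_zero_lt_deriv_digamma hy

theorem trigammaSqAddTetragamma_lt_rationalBound_four (hx : 0 < x) :
    trigammaSqAddTetragamma x < rationalBound 4 x := by
  refine lt_of_sub_add_one_lt (fun y hy ↦ ?_) hx (tendsto_trigammaSqAddTetragamma_add_nat hx)
    ((tendsto_rationalBound 4).comp (tendsto_const_add_natCast_atTop x))
  rw [← trigammaFromDiff_lt_trigammaFromDiff_iff hy, trigammaFromDiff_trigammaSqAddTetragamma hy]
  exact deriv_digamma_lt_trigammaFromDiff_rationalBound_four hy

end RationalBound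

theorem stmt_3 (x : ℝ) (hx : x ∈ Set.Ioi (0 : ℝ)) :
    (x ^ 2 + 12) / (12 * x ^ 4 * (x + 1) ^ 2) <
      (deriv digamma x) ^ 2 + deriv (deriv digamma) x ∧
    (deriv digamma x) ^ 2 + deriv (deriv digamma) x <
      (x ^ 2 + 4 * x + 12) / (12 * x ^ 4 * (x + 1) ^ 2) := by
  have hlower := rationalBound_zero_lt_trigammaSqAddTetragamma hx
  have hupper := trigammaSqAddTetragamma_lt_rationalBound_four hx
  rw [rationalBound, zero_mul, add_zero] at hlower
  exact ⟨hlower, hupper⟩
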